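/- For integers k, j ≥ 0: if μ > −1 and k ≥ 1 then ∂/∂z Q^μ_{k,j}(z,w) = (k(j+μ+1)/(μ+1)) Q^{μ+1}_{k−1,j}(z,w), while for k = 0 the left-hand side vanishes; and if μ > 0 then (1−zw) ∂/∂z̄ Q^μ_{k,j}(z,w) − μ z Q^μ_{k,j}(z,w) = −μ Q^{μ−1}_{k+1,j}(z,w). These are identities of bivariate polynomials in (z,w). -/

import Mathlib

noncomputable def jacobiP (α β : ℝ) (n : ℕ) : Polynomial ℝ :=
  (n.factorial : ℝ)⁻¹ •
    ∑ k ∈ Finset.range (n + 1),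
      ((n.choose k : ℝ) * ((ascPochhammer ℝ (n - k)).eval ((k : ℝ) + α + 1)) *
          ((ascPochhammer ℝ k).eval ((n : ℝ) + α + β + 1))) •
        ((Polynomial.X - 1) * Polynomial.C (2⁻¹ : ℝ)) ^ k

noncomputable def zernikeQ (μ : ℝ) (k j : ℕ) : MvPolynomial (Fin 2) ℂ :=
  if j ≤ k then
    MvPolynomial.C ((((j.factorial : ℝ) / ((ascPochhammer ℝ j).eval (μ + 1)) : ℝ) : ℂ)) *
      MvPolynomial.X 0 ^ (k - j) *
      Polynomial.aeval (2 * MvPolynomial.X 0 * MvPolynomial.X 1 - 1)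
        (jacobiP μ ((k - j : ℕ) : ℝ) j)
  else
    MvPolynomial.C ((((k.factorial : ℝ) / ((ascPochhammer ℝ k).eval (μ + 1)) : ℝ) : ℂ)) *
      MvPolynomial.X 1 ^ (j - k) *
      Polynomial.aeval (2 * MvPolynomial.X 0 * MvPolynomial.X 1 - 1)
        (jacobiP μ ((j - k : ℕ) : ℝ) k)

/-!
Pfaff's transformation of the terminating `₂F₁` defining the Jacobi polynomial turns the
Zernike polynomial into
`∑ m! (k choose m) (j choose m) / (μ+1)_m z^(k-m) w^(j-m) (zw-1)^m`,
which is symmetric under `(k, z) ↔ (j, w)` and so covers `j ≤ k` and `k < j` at once. In this form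
both ladder relations hold term by term: differentiating `(zw-1)^m` in `z` gives a factor `w` and
lowers `m` by one, while multiplying a `w`-derivative by `zw-1` raises `m` by one, so each relation
reduces to an identity between two consecutive coefficients and one target coefficient.
-/

section ChuVandermonde

open Finset Polynomial

theorem ascPochhammer_eval_succ_left {R : Type*} [CommSemiring R] (n : ℕ) (x : R) :
    (ascPochhammer R (n + 1)).eval x = x * (ascPochhammer R n).eval (x + 1) := by
  simp [ascPochhammer_succ_left]

theorem ascPochhammer_eval_eq_mul {R : Type*} [CommSemiring R] {m n : ℕ} (h : m ≤ n) (x : R) :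
    (ascPochhammer R n).eval x =
      (ascPochhammer R m).eval x * (ascPochhammer R (n - m)).eval (x + m) := by
  conv_lhs => rw [← Nat.add_sub_cancel' h, ← ascPochhammer_mul]
  simp

theorem ascPochhammer_eval_ne_zero_of_forall_ne_neg {R : Type*} [CommRing R] [IsDomain R]
    {x : R} (hx : ∀ n : ℕ, x ≠ -n) (n : ℕ) :
    (ascPochhammer R n).eval x ≠ 0 := by
  rw [Ne, ascPochhammer_eval_eq_zero_iff]
  rintro ⟨m, -, hm⟩
  exact hx m (by rw [hm, neg_neg])

theorem ascPochhammer_eval_add {R : Type*} [CommRing R] (a b : R) (n : ℕ) :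
    (ascPochhammer R n).eval (a + b) =
      ∑ m ∈ range (n + 1),
        n.choose m * (descPochhammer R m).eval a * (ascPochhammer R (n - m)).eval (b + m) := by
  have smeval_eq (i : ℕ) (x : R) :
      (descPochhammer ℤ i).smeval x = (descPochhammer R i).eval x := by
    rw [← aeval_eq_smeval, aeval_def, eval₂_eq_eval_map, descPochhammer_map]
  have reverse : (ascPochhammer R n).eval (a + b) =
      (descPochhammer R n).eval (a + (b + n - 1)) := by
    rw [descPochhammer_eval_eq_ascPochhammer, show a + (b + n - 1) - n + 1 = a + b by ring]
  have vandermonde := Ring.descPochhammer_smeval_add n (Commute.all a (b + n - 1))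
  simp only [smeval_eq, Nat.sum_antidiagonal_eq_sum_range_succ_mk] at vandermonde
  rw [reverse, vandermonde]
  refine sum_congr rfl fun m hm => ?_
  rw [descPochhammer_eval_eq_ascPochhammer R _ (n - m), Nat.cast_sub (mem_range_succ_iff.mp hm),
    show b + n - 1 - ((n : R) - m) + 1 = b + m by ring, mul_assoc]

variable {K : Type*} [Field K] {b : K} {n : ℕ}

theorem ascPochhammer_eval_ne_zero_of_le {m : ℕ} (hb : (ascPochhammer K n).eval b ≠ 0)
    (h : m ≤ n) : (ascPochhammer K m).eval b ≠ 0 :=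
  left_ne_zero_of_mul (ascPochhammer_eval_eq_mul h b ▸ hb)

theorem sum_choose_mul_descPochhammer_div_ascPochhammer
    (hb : (ascPochhammer K n).eval b ≠ 0) (a : K) :
    ∑ m ∈ range (n + 1),
        n.choose m * (descPochhammer K m).eval a / (ascPochhammer K m).eval b =
      (ascPochhammer K n).eval (a + b) / (ascPochhammer K n).eval b := by
  rw [ascPochhammer_eval_add, sum_div]
  refine sum_congr rfl fun m hm => ?_
  have split := ascPochhammer_eval_eq_mul (mem_range_succ_iff.mp hm) b
  rw [split] at hb ⊢
  rw [mul_div_mul_right _ _ (right_ne_zero_of_mul hb)]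

/-- The Pfaff transformation `₂F₁(-n, a+b; b; 1-x) = xⁿ ₂F₁(-n, -a; b; (x-1)/x)`. -/
theorem sum_pfaff_transformation {A : Type*} [CommRing A] [Algebra K A]
    (hb : (ascPochhammer K n).eval b ≠ 0) (a : K) (x : A) :
    ∑ m ∈ range (n + 1),
        (n.choose m * (ascPochhammer K m).eval (a + b) / (ascPochhammer K m).eval b) •
          (x - 1) ^ m =
      ∑ m ∈ range (n + 1),
        (n.choose m * (descPochhammer K m).eval a / (ascPochhammer K m).eval b) •
          (x ^ (n - m) * (x - 1) ^ m) := by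
  have pow_expand (i : ℕ) :
      x ^ i = ∑ l ∈ range (i + 1), (i.choose l : K) • (x - 1) ^ l := by
    conv_lhs => rw [← sub_add_cancel x 1, add_pow]
    simp [Algebra.smul_def, mul_comm]
  set f : ℕ → ℕ → A := fun m l =>
    ((n.choose m * (n - m).choose l : ℕ) * (descPochhammer K m).eval a /
      (ascPochhammer K m).eval b) • (x - 1) ^ (m + l) with hf
  calc
    _ = ∑ i ∈ range (n + 1), ∑ m ∈ range (i + 1), f m (i - m) := by
      refine sum_congr rfl fun i hi => ?_
      have hbi := ascPochhammer_eval_ne_zero_of_le hb (mem_range_succ_iff.mp hi)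
      rw [mul_div_assoc, ← sum_choose_mul_descPochhammer_div_ascPochhammer hbi, mul_sum, sum_smul]
      refine sum_congr rfl fun m hm => ?_
      have hmi := mem_range_succ_iff.mp hm
      simp only [hf]
      rw [← Nat.choose_mul hmi, Nat.add_sub_cancel' hmi]
      push_cast
      congr 1
      ring
    _ = ∑ m ∈ range (n + 1), ∑ l ∈ range (n + 1 - m), f m l := sum_range_diag_flip _ _
    _ = _ := by
      refine sum_congr rfl fun m hm => ?_
      rw [Nat.sub_add_comm (mem_range_succ_iff.mp hm), pow_expand, sum_mul, smul_sum]
      refine sum_congr rfl fun l _ => ?_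
      rw [smul_mul_assoc, smul_smul, ← pow_add, add_comm l m]
      simp only [hf]
      push_cast
      congr 1
      ring

end ChuVandermonde

section SymmetricForm

open Finset Polynomial
open scoped Nat

variable {K : Type*} [Field K] {A : Type*} [CommRing A] [Algebra K A]

/-- The coefficient `m! (k choose m) (j choose m) / (μ+1)_m` of the symmetric expansion
`zernikeSum`; it is `0` by convention when `(μ+1)_m = 0`. -/
noncomputable def zernikeCoeff (μ : K) (k j m : ℕ) : K :=
  (m ! * k.choose m * j.choose m : ℕ) / (ascPochhammer K m).eval (μ + 1)

/-- The symmetric expansion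
`∑ m! (k choose m) (j choose m) / (μ+1)_m z^(k-m) w^(j-m) (zw-1)^m`
of the Zernike polynomial of parameter `μ`, at two elements `z`, `w` of a commutative algebra. -/
noncomputable def zernikeSum (μ : K) (k j : ℕ) (z w : A) : A :=
  ∑ m ∈ range (min k j + 1),
    zernikeCoeff μ k j m • (z ^ (k - m) * w ^ (j - m) * (z * w - 1) ^ m)

theorem zernikeCoeff_comm (μ : K) (k j m : ℕ) : zernikeCoeff μ k j m = zernikeCoeff μ j k m := by
  rw [zernikeCoeff, zernikeCoeff, mul_right_comm]

theorem zernikeCoeff_eq_zero_of_lt_left (μ : K) {k m : ℕ} (j : ℕ) (h : k < m) :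
    zernikeCoeff μ k j m = 0 := by
  simp [zernikeCoeff, Nat.choose_eq_zero_of_lt h]

theorem zernikeCoeff_eq_zero_of_lt_right (μ : K) (k : ℕ) {j m : ℕ} (h : j < m) :
    zernikeCoeff μ k j m = 0 := by
  rw [zernikeCoeff_comm, zernikeCoeff_eq_zero_of_lt_left μ k h]

theorem zernikeSum_comm (μ : K) (k j : ℕ) (z w : A) :
    zernikeSum μ k j z w = zernikeSum μ j k w z := by
  simp only [zernikeSum, min_comm k j, zernikeCoeff_comm μ k j, mul_comm (z ^ _), mul_comm z w]

theorem zernikeSum_zero_left (μ : K) (j : ℕ) (z w : A) : zernikeSum μ 0 j z w = w ^ j := by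
  simp [zernikeSum, zernikeCoeff]

theorem zernikeSum_eq_sum_range_right (μ : K) (k j : ℕ) (z w : A) :
    zernikeSum μ k j z w = ∑ m ∈ range (j + 1),
      zernikeCoeff μ k j m • (z ^ (k - m) * w ^ (j - m) * (z * w - 1) ^ m) := by
  refine sum_subset (range_mono (by omega)) fun m hm hm' => ?_
  rw [mem_range] at hm hm'
  rw [zernikeCoeff_eq_zero_of_lt_left μ j (by omega), zero_smul]

end SymmetricForm

section Jacobi

open Finset Polynomial
open scoped Nat

variable {A : Type*} [CommRing A] [Algebra ℝ A]

theorem factorial_div_smul_aeval_jacobiP {α : ℝ} (β : ℝ) {n : ℕ}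
    (hα : (ascPochhammer ℝ n).eval (α + 1) ≠ 0) (x : A) :
    (n ! / (ascPochhammer ℝ n).eval (α + 1)) • aeval (2 * x - 1) (jacobiP α β n) =
      ∑ m ∈ range (n + 1),
        (n.choose m * (ascPochhammer ℝ m).eval (n + β + (α + 1)) /
          (ascPochhammer ℝ m).eval (α + 1)) • (x - 1) ^ m := by
  have half : aeval (2 * x - 1) ((X - 1) * C (2⁻¹ : ℝ)) = x - 1 := by
    have two_smul_half : (2 : A) * algebraMap ℝ A 2⁻¹ = 1 := by
      rw [← map_ofNat (algebraMap ℝ A) 2, ← map_mul, mul_inv_cancel₀ two_ne_zero, map_one]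
    simp only [map_mul, map_sub, aeval_X, map_one, aeval_C]
    linear_combination (x - 1) * two_smul_half
  simp only [jacobiP, map_smul, map_sum, map_pow, half, smul_sum, smul_smul]
  refine sum_congr rfl fun m hm => ?_
  have split := ascPochhammer_eval_eq_mul (mem_range_succ_iff.mp hm) (α + 1)
  rw [split] at hα ⊢
  have hm_ne := left_ne_zero_of_mul hα
  have hnm_ne := right_ne_zero_of_mul hα
  have factorial_ne : (n ! : ℝ) ≠ 0 := by positivity
  rw [show (m : ℝ) + α + 1 = α + 1 + m by ring,
    show (n : ℝ) + α + β + 1 = n + β + (α + 1) by ring]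
  congr 1
  field_simp

theorem zernikeSum_eq_jacobiP {μ : ℝ} {k j : ℕ} (hjk : j ≤ k)
    (hμ : (ascPochhammer ℝ j).eval (μ + 1) ≠ 0) (z w : A) :
    zernikeSum μ k j z w =
      (j ! / (ascPochhammer ℝ j).eval (μ + 1)) •
        (z ^ (k - j) * aeval (2 * z * w - 1) (jacobiP μ ((k - j : ℕ) : ℝ) j)) := by
  rw [← mul_smul_comm, mul_assoc 2 z w, factorial_div_smul_aeval_jacobiP _ hμ,
    sum_pfaff_transformation hμ, ← Nat.cast_add, Nat.add_sub_cancel' hjk,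
    zernikeSum_eq_sum_range_right, mul_sum]
  refine sum_congr rfl fun m hm => ?_
  have pow_split : z ^ (k - m) = z ^ (k - j) * z ^ (j - m) := by
    rw [← pow_add]
    congr 1
    have := mem_range_succ_iff.mp hm
    omega
  rw [zernikeCoeff, descPochhammer_eval_eq_descFactorial,
    Nat.descFactorial_eq_factorial_mul_choose, mul_comm _ (j.choose m), Nat.cast_mul, pow_split,
    mul_smul_comm, mul_pow]
  congr 1
  ring

theorem real_smul_eq_C_mul {σ : Type*} (r : ℝ) (p : MvPolynomial σ ℂ) :
    r • p = MvPolynomial.C (r : ℂ) * p :=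
  Algebra.smul_def r p

theorem zernikeQ_eq_zernikeSum {μ : ℝ} {k j : ℕ}
    (hμ : (ascPochhammer ℝ (min k j)).eval (μ + 1) ≠ 0) :
    zernikeQ μ k j = zernikeSum μ k j (MvPolynomial.X 0) (MvPolynomial.X 1) := by
  rw [zernikeQ]
  split_ifs with hjk
  · rw [min_eq_right hjk] at hμ
    rw [zernikeSum_eq_jacobiP hjk hμ, real_smul_eq_C_mul, mul_assoc]
  · rw [min_eq_left (by omega)] at hμ
    rw [zernikeSum_comm, zernikeSum_eq_jacobiP (by omega) hμ, real_smul_eq_C_mul, mul_assoc,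
      mul_assoc, mul_assoc, mul_comm (MvPolynomial.X 1) (MvPolynomial.X 0)]

end Jacobi

section Ladder

open Finset Polynomial

variable {K : Type*} [Field K] {μ : K}

theorem choose_succ_mul_succ_add_choose_mul (j m : ℕ) :
    j.choose (m + 1) * (m + 1) + j.choose m * m = j.choose m * j := by
  rw [Nat.choose_succ_right_eq, ← mul_add]
  rcases le_or_gt m j with h | h
  · rw [Nat.sub_add_cancel h]
  · simp [Nat.choose_eq_zero_of_lt h]

theorem zernikeCoeff_lower (hμ : ∀ n : ℕ, μ + 1 ≠ -n) (k j m : ℕ) :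
    zernikeCoeff μ (k + 1) j m * (k + 1 - m : ℕ) +
        zernikeCoeff μ (k + 1) j (m + 1) * (m + 1 : ℕ) =
      (k + 1) * (j + μ + 1) / (μ + 1) * zernikeCoeff (μ + 1) k j m := by
  have absorb_k : (k.choose m * (k + 1) : K) = (k + 1).choose m * (k + 1 - m : ℕ) := by
    norm_cast
    rw [Nat.choose_mul_succ_eq]
  have absorb_k' : ((k + 1) * k.choose m : K) = (k + 1).choose (m + 1) * (m + 1) := by
    norm_cast
    rw [Nat.add_one_mul_choose_eq]
  have absorb_j : (j.choose (m + 1) * (m + 1) + j.choose m * m : K) = j.choose m * j := by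
    norm_cast
    rw [choose_succ_mul_succ_add_choose_mul]
  have ne_m := ascPochhammer_eval_ne_zero_of_forall_ne_neg hμ m
  have ne_succ := ascPochhammer_eval_ne_zero_of_forall_ne_neg hμ (m + 1)
  rw [ascPochhammer_succ_eval] at ne_succ
  have ne_add := right_ne_zero_of_mul ne_succ
  have ne_one : μ + 1 ≠ 0 := by simpa using hμ 0
  have shift : (ascPochhammer K m).eval (μ + 1 + 1) =
      (ascPochhammer K m).eval (μ + 1) * (μ + 1 + m) / (μ + 1) := by
    rw [← ascPochhammer_succ_eval, ascPochhammer_eval_succ_left, mul_div_cancel_left₀ _ ne_one]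
  simp only [zernikeCoeff, ascPochhammer_succ_eval, shift, Nat.factorial_succ]
  push_cast
  field_simp
  linear_combination (m.factorial : K) * (-j.choose m * (μ + 1 + m) * absorb_k -
    (m + 1) * j.choose (m + 1) * absorb_k' + (k + 1) * k.choose m * absorb_j)

theorem zernikeCoeff_raise (hμ : ∀ n : ℕ, μ ≠ -n) (k j m : ℕ) :
    zernikeCoeff μ k j m * (j - m : ℕ) + zernikeCoeff μ k j (m + 1) * ((m + 1 : ℕ) + μ) =
      μ * zernikeCoeff (μ - 1) (k + 1) j (m + 1) := by
  have pascal : ((k + 1).choose (m + 1) : K) = k.choose m + k.choose (m + 1) := by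
    norm_cast
  have absorb : (j.choose (m + 1) * (m + 1) : K) = j.choose m * (j - m : ℕ) := by
    norm_cast
    rw [Nat.choose_succ_right_eq]
  have ne_zero : μ ≠ 0 := by simpa using hμ 0
  have ne_succ := ascPochhammer_eval_ne_zero_of_forall_ne_neg hμ (m + 1)
  rw [ascPochhammer_eval_succ_left] at ne_succ
  have ne_m := right_ne_zero_of_mul ne_succ
  have ne_add : μ + 1 + m ≠ 0 := by
    intro h
    exact hμ (m + 1) (by push_cast; linear_combination h)
  simp only [zernikeCoeff, sub_add_cancel, ascPochhammer_eval_succ_left m μ,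
    ascPochhammer_succ_eval, Nat.factorial_succ]
  push_cast
  field_simp
  rw [pascal]
  linear_combination -(k.choose m * m.factorial * (μ + 1 + m) : K) * absorb

variable {A : Type*} [CommRing A] [Algebra K A] {z w : A}

theorem derivation_pow_mul_pow_mul_sub_one_pow (D : Derivation K A A) (hz : D z = 1) (hw : D w = 0)
    (a b m : ℕ) :
    D (z ^ a * w ^ b * (z * w - 1) ^ m) =
      (a : K) • (z ^ (a - 1) * w ^ b * (z * w - 1) ^ m) +
        (m : K) • (z ^ a * w ^ (b + 1) * (z * w - 1) ^ (m - 1)) := by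
  simp only [Derivation.leibniz, Derivation.leibniz_pow, map_sub, Derivation.map_one_eq_zero, hz,
    hw, smul_eq_mul, ← Nat.cast_smul_eq_nsmul K, Algebra.smul_def, map_natCast]
  ring

theorem derivation_zernikeSum_left (hμ : ∀ n : ℕ, μ + 1 ≠ -n) (D : Derivation K A A)
    (hz : D z = 1) (hw : D w = 0) (k j : ℕ) :
    D (zernikeSum μ (k + 1) j z w) =
      ((k + 1) * (j + μ + 1) / (μ + 1)) • zernikeSum (μ + 1) k j z w := by
  have second_sum : ∑ m ∈ range (j + 1), (zernikeCoeff μ (k + 1) j m * m) •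
        (z ^ (k + 1 - m) * w ^ (j - m + 1) * (z * w - 1) ^ (m - 1)) =
      ∑ m ∈ range (j + 1), (zernikeCoeff μ (k + 1) j (m + 1) * (m + 1 : ℕ)) •
        (z ^ (k - m) * w ^ (j - m) * (z * w - 1) ^ m) := by
    rw [sum_range_succ', sum_range_succ _ j, zernikeCoeff_eq_zero_of_lt_right _ _ j.lt_succ_self]
    simp only [Nat.cast_zero, mul_zero, zero_mul, zero_smul, add_zero]
    refine sum_congr rfl fun m hm => ?_
    rw [mem_range] at hm
    rw [show k + 1 - (m + 1) = k - m by omega, show j - (m + 1) + 1 = j - m by omega,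
      Nat.add_sub_cancel]
  have first_exponent (m : ℕ) : k + 1 - m - 1 = k - m := by omega
  simp only [zernikeSum_eq_sum_range_right, map_sum, Derivation.map_smul,
    derivation_pow_mul_pow_mul_sub_one_pow D hz hw, smul_add, smul_smul, sum_add_distrib,
    first_exponent, second_sum]
  rw [← sum_add_distrib, smul_sum]
  refine sum_congr rfl fun m _ => ?_
  rw [← add_smul, zernikeCoeff_lower hμ, smul_smul]

theorem sub_one_mul_derivation_zernikeCoeff_smul (μ : K) (D : Derivation K A A)
    (hz : D z = 0) (hw : D w = 1) (k j m : ℕ) :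
    (z * w - 1) * D (zernikeCoeff μ k j m • (z ^ (k - m) * w ^ (j - m) * (z * w - 1) ^ m)) +
        μ • (z * zernikeCoeff μ k j m • (z ^ (k - m) * w ^ (j - m) * (z * w - 1) ^ m)) =
      (zernikeCoeff μ k j m * (j - m : ℕ)) •
          (z ^ (k - m) * w ^ (j - (m + 1)) * (z * w - 1) ^ (m + 1)) +
        (zernikeCoeff μ k j m * (m + μ)) •
          (z ^ (k + 1 - m) * w ^ (j - m) * (z * w - 1) ^ m) := by
  rcases lt_or_ge k m with hkm | hmk
  · simp [zernikeCoeff_eq_zero_of_lt_left μ j hkm]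
  have derivative := derivation_pow_mul_pow_mul_sub_one_pow D hw hz (j - m) (k - m) m
  rw [mul_comm w z, mul_comm (w ^ _)] at derivative
  have absorb : (m : A) * ((z * w - 1) * (z * w - 1) ^ (m - 1)) = m * (z * w - 1) ^ m := by
    cases m
    · simp
    · rw [Nat.add_sub_cancel, ← pow_succ']
  rw [Derivation.map_smul, derivative, Nat.sub_add_comm hmk, Nat.sub_sub]
  simp only [Algebra.smul_def, map_mul, map_add, map_natCast]
  linear_combination
    algebraMap K A (zernikeCoeff μ k j m) * z ^ (k - m + 1) * w ^ (j - m) * absorb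

theorem sub_one_mul_derivation_zernikeSum_right (hμ : ∀ n : ℕ, μ ≠ -n) (D : Derivation K A A)
    (hz : D z = 0) (hw : D w = 1) (k j : ℕ) :
    (z * w - 1) * D (zernikeSum μ k j z w) + μ • (z * zernikeSum μ k j z w) =
      μ • zernikeSum (μ - 1) (k + 1) j z w := by
  have coeff_zero : zernikeCoeff μ k j 0 * ((0 : ℕ) + μ) =
      μ * zernikeCoeff (μ - 1) (k + 1) j 0 := by
    simp [zernikeCoeff]
  simp only [zernikeSum_eq_sum_range_right, map_sum, mul_sum, smul_sum, ← sum_add_distrib,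
    sub_one_mul_derivation_zernikeCoeff_smul μ D hz hw]
  rw [sum_add_distrib, sum_range_succ, sum_range_succ', sum_range_succ', coeff_zero, Nat.sub_self,
    Nat.cast_zero, mul_zero, zero_smul, add_zero, ← add_assoc, ← sum_add_distrib, smul_smul]
  congr 1
  refine sum_congr rfl fun m _ => ?_
  rw [smul_smul, ← zernikeCoeff_raise hμ, add_smul, Nat.add_sub_add_right]

end Ladder

open MvPolynomial in
theorem zernike_ladder_Z1_general (μ : ℝ) (k j : ℕ) :
    ((∀ n : ℕ, μ + 1 ≠ -n) → 1 ≤ k →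
      pderiv (0 : Fin 2) (zernikeQ μ k j) =
        C ((((k : ℝ) * ((j : ℝ) + μ + 1) / (μ + 1) : ℝ)) : ℂ) *
          zernikeQ (μ + 1) (k - 1) j) ∧
    (k = 0 → pderiv (0 : Fin 2) (zernikeQ μ k j) = 0) ∧
    ((∀ n : ℕ, μ ≠ -n) →
      (1 - X 0 * X 1) * pderiv (1 : Fin 2) (zernikeQ μ k j) -
          C ((μ : ℂ)) * X 0 * zernikeQ μ k j =
        -(C ((μ : ℂ)) * zernikeQ (μ - 1) (k + 1) j)) := by
  have d0_X1 : pderiv (0 : Fin 2) (X 1 : MvPolynomial (Fin 2) ℂ) = 0 :=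
    pderiv_X_of_ne one_ne_zero
  have d1_X0 : pderiv (1 : Fin 2) (X 0 : MvPolynomial (Fin 2) ℂ) = 0 :=
    pderiv_X_of_ne zero_ne_one
  let dz := (pderiv (R := ℂ) (0 : Fin 2)).restrictScalars ℝ
  let dw := (pderiv (R := ℂ) (1 : Fin 2)).restrictScalars ℝ
  refine ⟨fun hμ hk => ?_, ?_, fun hμ => ?_⟩
  · obtain ⟨k, rfl⟩ := Nat.exists_eq_add_of_le' hk
    have hμ' (n : ℕ) : μ + 1 + 1 ≠ -n := fun h => hμ (n + 1) (by push_cast; linarith)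
    rw [zernikeQ_eq_zernikeSum (ascPochhammer_eval_ne_zero_of_forall_ne_neg hμ _),
      Nat.add_sub_cancel,
      zernikeQ_eq_zernikeSum (ascPochhammer_eval_ne_zero_of_forall_ne_neg hμ' _),
      ← real_smul_eq_C_mul, Nat.cast_succ]
    exact derivation_zernikeSum_left hμ dz (pderiv_X_self _) d0_X1 k j
  · rintro rfl
    rw [zernikeQ_eq_zernikeSum (by simp), zernikeSum_zero_left, pderiv_pow, d0_X1, mul_zero]
  · have hμ' (n : ℕ) : μ + 1 ≠ -n := fun h => hμ (n + 1) (by push_cast; linarith)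
    have hμ'' (n : ℕ) : μ - 1 + 1 ≠ -n := by simpa using hμ n
    rw [zernikeQ_eq_zernikeSum (ascPochhammer_eval_ne_zero_of_forall_ne_neg hμ' _),
      zernikeQ_eq_zernikeSum (ascPochhammer_eval_ne_zero_of_forall_ne_neg hμ'' _), mul_assoc,
      ← real_smul_eq_C_mul, ← real_smul_eq_C_mul]
    have raise := sub_one_mul_derivation_zernikeSum_right hμ dw d1_X0 (pderiv_X_self _) k j
    rw [Derivation.restrictScalars_apply] at raise
    linear_combination -raise

open MvPolynomial in
theorem zernike_ladder_Z1 (μ : ℝ) (k j : ℕ) :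
    (μ > -1 → 1 ≤ k →
      pderiv (0 : Fin 2) (zernikeQ μ k j) =
        C ((((k : ℝ) * ((j : ℝ) + μ + 1) / (μ + 1) : ℝ)) : ℂ) *
          zernikeQ (μ + 1) (k - 1) j) ∧
    (k = 0 → pderiv (0 : Fin 2) (zernikeQ μ k j) = 0) ∧
    (μ > 0 →
      (1 - X 0 * X 1) * pderiv (1 : Fin 2) (zernikeQ μ k j) -
          C ((μ : ℂ)) * X 0 * zernikeQ μ k j =
        -(C ((μ : ℂ)) * zernikeQ (μ - 1) (k + 1) j)) := by
  obtain ⟨lower, vanish, raise⟩ := zernike_ladder_Z1_general μ k j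
  refine ⟨fun hμ => lower fun n h => ?_, vanish, fun hμ => raise fun n h => ?_⟩ <;>
    linarith [n.cast_nonneg (α := ℝ)]
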